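/- Let N = (S, A, T) be a P/T Petri net. A place relation R ⊆ S × S is a place bisimulation if and only if the following two conditions hold: (1) for all t1 ∈ T and for all markings m such that (pre(t1), m) ∈ R⊕, there exists t2 ∈ T such that pre(t2) = m, ℓ(t1) = ℓ(t2) and (post(t1), post(t2)) ∈ R⊕; and (2) for all t2 ∈ T and for all markings m such that (m, pre(t2)) ∈ R⊕, there exists t1 ∈ T such that pre(t1) = m, ℓ(t1) = ℓ(t2) and (post(t1), post(t2)) ∈ R⊕. -/

import Mathlib

/-- A transition of a P/T net: a triple (pre-set, label, post-set). -/
structure PNTrans (S A : Type) where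
  pre : Multiset S
  label : A
  post : Multiset S
deriving DecidableEq

/-- A P/T Petri net over places `S` and labels `A`: a finite set of transitions,
each with a nonempty pre-set. -/
structure PetriNet (S A : Type) [DecidableEq S] [DecidableEq A] where
  T : Finset (PNTrans S A)
  pre_ne : ∀ t ∈ T, t.pre ≠ 0

/-- The additive closure `R⊕` of a place relation `R`: the least relation on markings
containing `(θ, θ)` and closed under adding `R`-related places on both sides. -/
inductive AddClosure {S : Type} (R : S → S → Prop) : Multiset S → Multiset S → Prop
  | zero : AddClosure R 0 0
  | cons {s1 s2 : S} {m1 m2 : Multiset S} :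
      R s1 s2 → AddClosure R m1 m2 → AddClosure R (s1 ::ₘ m1) (s2 ::ₘ m2)

/-- `Fires N m t m'` : transition `t` of `N` is enabled at marking `m` and its firing
produces `m' = (m ⊖ pre(t)) ⊕ post(t)`. -/
def Fires {S A : Type} [DecidableEq S] [DecidableEq A]
    (N : PetriNet S A) (m : Multiset S) (t : PNTrans S A) (m' : Multiset S) : Prop :=
  t ∈ N.T ∧ t.pre ≤ m ∧ m' = m - t.pre + t.post

/-- A place bisimulation on `N`. -/
def IsPlaceBisim {S A : Type} [DecidableEq S] [DecidableEq A]
    (N : PetriNet S A) (R : S → S → Prop) : Prop :=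
  ∀ m1 m2, AddClosure R m1 m2 →
    (∀ t1 m1', Fires N m1 t1 m1' →
      ∃ t2 m2', Fires N m2 t2 m2' ∧ AddClosure R t1.pre t2.pre ∧
        t1.label = t2.label ∧ AddClosure R t1.post t2.post ∧ AddClosure R m1' m2') ∧
    (∀ t2 m2', Fires N m2 t2 m2' →
      ∃ t1 m1', Fires N m1 t1 m1' ∧ AddClosure R t1.pre t2.pre ∧
        t1.label = t2.label ∧ AddClosure R t1.post t2.post ∧ AddClosure R m1' m2')

/-- Place bisimilarity `m1 ~p m2`. -/
def PlaceBisimilar {S A : Type} [DecidableEq S] [DecidableEq A]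
    (N : PetriNet S A) (m1 m2 : Multiset S) : Prop :=
  ∃ R : S → S → Prop, IsPlaceBisim N R ∧ AddClosure R m1 m2

/-- An interleaving bisimulation on the markings of `N`. -/
def IsIntBisim {S A : Type} [DecidableEq S] [DecidableEq A]
    (N : PetriNet S A) (Q : Multiset S → Multiset S → Prop) : Prop :=
  ∀ m1 m2, Q m1 m2 →
    (∀ t1 m1', Fires N m1 t1 m1' →
      ∃ t2 m2', Fires N m2 t2 m2' ∧ t1.label = t2.label ∧ Q m1' m2') ∧
    (∀ t2 m2', Fires N m2 t2 m2' →
      ∃ t1 m1', Fires N m1 t1 m1' ∧ t1.label = t2.label ∧ Q m1' m2')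

/-- Interleaving bisimilarity `m1 ~int m2`. -/
def IntBisimilar {S A : Type} [DecidableEq S] [DecidableEq A]
    (N : PetriNet S A) (m1 m2 : Multiset S) : Prop :=
  ∃ Q, IsIntBisim N Q ∧ Q m1 m2

/-- First projection of a linking. -/
def lproj1 {S : Type} (l : Multiset (S × S)) : Multiset S := l.map Prod.fst

/-- Second projection of a linking. -/
def lproj2 {S : Type} (l : Multiset (S × S)) : Multiset S := l.map Prod.snd

/-- A structure-preserving bisimulation on `N`: a set of linkings. -/
def IsSpBisim {S A : Type} [DecidableEq S] [DecidableEq A]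
    (N : PetriNet S A) (R : Set (Multiset (S × S))) : Prop :=
  ∀ l ∈ R, ∀ c ≤ l,
    (∀ t1 ∈ N.T, t1.pre = lproj1 c →
      ∃ t2 ∈ N.T, t1.label = t2.label ∧ t2.pre = lproj2 c ∧
        ∃ cb : Multiset (S × S), t1.post = lproj1 cb ∧ t2.post = lproj2 cb ∧
          l - c + cb ∈ R) ∧
    (∀ t2 ∈ N.T, t2.pre = lproj2 c →
      ∃ t1 ∈ N.T, t1.label = t2.label ∧ t1.pre = lproj1 c ∧
        ∃ cb : Multiset (S × S), t1.post = lproj1 cb ∧ t2.post = lproj2 cb ∧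
          l - c + cb ∈ R)

/-- Structure-preserving bisimilarity `m1 ~sp m2`. -/
def SpBisimilar {S A : Type} [DecidableEq S] [DecidableEq A]
    (N : PetriNet S A) (m1 m2 : Multiset S) : Prop :=
  ∃ (R : Set (Multiset (S × S))) (l : Multiset (S × S)),
    IsSpBisim N R ∧ l ∈ R ∧ lproj1 l = m1 ∧ lproj2 l = m2

/-!
`R⊕` preserves size, and a marking related to a sum splits into summands related to its parts.
If `m` is related to `pre(t)`, then `t` fires at `pre(t)`, so a place bisimulation supplies a
matching transition enabled at `m`; its pre-set is contained in `m` and has the same size, so it is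
all of `m`. Conversely, if `t` fires at `m₁ = pre(t) ⊕ r` and `m₁` is related to `m₂`, then `m₂`
splits into a part related to `pre(t)`, which is the pre-set of a matching transition, and a
remainder related to `r`, which is left untouched. The two directions of the bisimulation game are
exchanged by reversing `R`.
-/

section AddClosure

variable {S : Type} {R : S → S → Prop} {m m' n n' : Multiset S}

theorem addClosure_iff_rel : AddClosure R m n ↔ Multiset.Rel R m n := by
  constructor <;> intro h
  · induction h with
    | zero => exact .zero
    | cons hs _ ih => exact .cons hs ih
  · induction h with
    | zero => exact .zero
    | cons hs _ ih => exact .cons hs ih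

theorem addClosure_flip_iff : AddClosure (flip R) m n ↔ AddClosure R n m := by
  simp only [addClosure_iff_rel, Multiset.rel_flip]

theorem addClosure_add_left_iff :
    AddClosure R (m + m') n ↔
      ∃ k k', AddClosure R m k ∧ AddClosure R m' k' ∧ n = k + k' := by
  simp only [addClosure_iff_rel, Multiset.rel_add_left]

namespace AddClosure

theorem add (h : AddClosure R m n) (h' : AddClosure R m' n') :
    AddClosure R (m + m') (n + n') :=
  addClosure_add_left_iff.2 ⟨n, n', h, h', rfl⟩

theorem card_eq (h : AddClosure R m n) : m.card = n.card :=
  Multiset.card_eq_card_of_rel (addClosure_iff_rel.1 h)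

theorem eq_of_le (hn : AddClosure R m n) (hn' : AddClosure R m n') (hle : n ≤ n') : n = n' :=
  Multiset.eq_of_le_of_card_le hle (hn'.card_eq.symm.trans hn.card_eq).le

end AddClosure

end AddClosure

section PlaceBisim

variable {S A : Type} [DecidableEq S] [DecidableEq A]

theorem fires_iff_exists_add {N : PetriNet S A} {t : PNTrans S A} {m m' : Multiset S} :
    Fires N m t m' ↔ t ∈ N.T ∧ ∃ r, m = t.pre + r ∧ m' = r + t.post := by
  constructor
  · rintro ⟨ht, hle, rfl⟩
    exact ⟨ht, m - t.pre, (add_tsub_cancel_of_le hle).symm, rfl⟩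
  · rintro ⟨ht, r, rfl, rfl⟩
    exact ⟨ht, Multiset.le_add_right _ _, by rw [add_tsub_cancel_left]⟩

/-- A place simulation: the half of the place bisimulation game in which the left marking moves
and the right marking answers. -/
def IsPlaceSim (N : PetriNet S A) (R : S → S → Prop) : Prop :=
  ∀ m₁ m₂, AddClosure R m₁ m₂ → ∀ t₁ m₁', Fires N m₁ t₁ m₁' →
    ∃ t₂ m₂', Fires N m₂ t₂ m₂' ∧ AddClosure R t₁.pre t₂.pre ∧
      t₁.label = t₂.label ∧ AddClosure R t₁.post t₂.post ∧ AddClosure R m₁' m₂'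

/-- A preset simulation: every marking related to the pre-set of a transition is itself the pre-set
of a matching transition. It replaces the game of `IsPlaceSim`, played on all pairs of related
markings, by a condition on the transitions. -/
def IsPresetSim (N : PetriNet S A) (R : S → S → Prop) : Prop :=
  ∀ t₁ ∈ N.T, ∀ m, AddClosure R t₁.pre m →
    ∃ t₂ ∈ N.T, t₂.pre = m ∧ t₁.label = t₂.label ∧ AddClosure R t₁.post t₂.post

variable {N : PetriNet S A} {R : S → S → Prop}

theorem IsPlaceSim.isPresetSim (hR : IsPlaceSim N R) : IsPresetSim N R := by
  intro t₁ ht₁ m hm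
  have hfire : Fires N t₁.pre t₁ t₁.post :=
    fires_iff_exists_add.2 ⟨ht₁, 0, (add_zero _).symm, (zero_add _).symm⟩
  obtain ⟨t₂, _, ⟨ht₂, hle, _⟩, hpre, hlabel, hpost, _⟩ := hR _ _ hm _ _ hfire
  exact ⟨t₂, ht₂, hpre.eq_of_le hm hle, hlabel, hpost⟩

theorem IsPresetSim.isPlaceSim (hR : IsPresetSim N R) : IsPlaceSim N R := by
  intro m₁ m₂ hm t₁ m₁' hfire
  obtain ⟨ht₁, r₁, rfl, rfl⟩ := fires_iff_exists_add.1 hfire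
  obtain ⟨p, r₂, hp, hr, rfl⟩ := addClosure_add_left_iff.1 hm
  obtain ⟨t₂, ht₂, rfl, hlabel, hpost⟩ := hR t₁ ht₁ p hp
  have hfire₂ : Fires N (t₂.pre + r₂) t₂ (r₂ + t₂.post) :=
    fires_iff_exists_add.2 ⟨ht₂, r₂, rfl, rfl⟩
  exact ⟨t₂, _, hfire₂, hp, hlabel, hpost, hr.add hpost⟩

theorem isPlaceSim_iff_isPresetSim : IsPlaceSim N R ↔ IsPresetSim N R :=
  ⟨IsPlaceSim.isPresetSim, IsPresetSim.isPlaceSim⟩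

theorem isPlaceSim_flip_iff :
    IsPlaceSim N (flip R) ↔
      ∀ m₁ m₂, AddClosure R m₁ m₂ → ∀ t₂ m₂', Fires N m₂ t₂ m₂' →
        ∃ t₁ m₁', Fires N m₁ t₁ m₁' ∧ AddClosure R t₁.pre t₂.pre ∧
          t₁.label = t₂.label ∧ AddClosure R t₁.post t₂.post ∧ AddClosure R m₁' m₂' := by
  simp only [IsPlaceSim, addClosure_flip_iff, eq_comm]
  exact forall_comm

theorem isPresetSim_flip_iff :
    IsPresetSim N (flip R) ↔
      ∀ t₂ ∈ N.T, ∀ m, AddClosure R m t₂.pre →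
        ∃ t₁ ∈ N.T, t₁.pre = m ∧ t₁.label = t₂.label ∧ AddClosure R t₁.post t₂.post := by
  simp only [IsPresetSim, addClosure_flip_iff, eq_comm]

theorem isPlaceBisim_iff_isPlaceSim_and_flip :
    IsPlaceBisim N R ↔ IsPlaceSim N R ∧ IsPlaceSim N (flip R) := by
  rw [isPlaceSim_flip_iff]
  simp only [IsPlaceBisim, IsPlaceSim, imp_and, forall_and]

end PlaceBisim

theorem placeBisim_iff_general {S A : Type} [DecidableEq S] [DecidableEq A]
    (N : PetriNet S A) (R : S → S → Prop) :
    IsPlaceBisim N R ↔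
      ((∀ t1 ∈ N.T, ∀ m : Multiset S, AddClosure R t1.pre m →
        ∃ t2 ∈ N.T, t2.pre = m ∧ t1.label = t2.label ∧
          AddClosure R t1.post t2.post) ∧
       (∀ t2 ∈ N.T, ∀ m : Multiset S, AddClosure R m t2.pre →
        ∃ t1 ∈ N.T, t1.pre = m ∧ t1.label = t2.label ∧
          AddClosure R t1.post t2.post)) := by
  rw [isPlaceBisim_iff_isPlaceSim_and_flip, isPlaceSim_iff_isPresetSim,
    isPlaceSim_iff_isPresetSim, isPresetSim_flip_iff, IsPresetSim]

/-- finite characterization of place bisimulations. -/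
theorem placeBisim_iff {S A : Type} [Fintype S] [Fintype A]
    [DecidableEq S] [DecidableEq A] (N : PetriNet S A) (R : S → S → Prop) :
    IsPlaceBisim N R ↔
      ((∀ t1 ∈ N.T, ∀ m : Multiset S, AddClosure R t1.pre m →
        ∃ t2 ∈ N.T, t2.pre = m ∧ t1.label = t2.label ∧
          AddClosure R t1.post t2.post) ∧
       (∀ t2 ∈ N.T, ∀ m : Multiset S, AddClosure R m t2.pre →
        ∃ t1 ∈ N.T, t1.pre = m ∧ t1.label = t2.label ∧
          AddClosure R t1.post t2.post)) :=
  placeBisim_iff_general N R
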